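/- arXiv:2201.13424 — 3 statements merged into one kernel-verified Lean document; each statement's English description precedes it below -/
import Mathlib

section
/- Let r ≥ 2 and let X₁, …, X_r be nonempty finite sets with product X. Suppose Y ⊆ X has |Y| ≥ δ·|X| for some real δ with 0 < δ < 2^{−r−1}, and let b ≥ 1 be an integer satisfying b ≤ (log(min_{i∈[r]} |X_i|) / (5·log(δ^{−1})))^{1/(r−1)}. Then there exist subsets Z_i ⊆ X_i with |Z_i| = b for all i ∈ [r] such that Z₁ × ⋯ × Z_r ⊆ Y. -/
/-!
Keep coordinate `0` as it is and blow up every other coordinate to a `b`-tuple of points. Two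
applications of Jensen's inequality per coordinate show that for a uniformly random system of tuples
`t`, the expected density of the set of `a : X 0` with `{a} × ∏ᵢ range tᵢ ⊆ Y` is at least
`(dens Y) ^ b ^ (r - 1)`. A union bound over pairs of positions shows that some `tᵢ` fails to be
injective with probability at most `∑ᵢ b (b - 1) / |Xᵢ|`. If the first quantity exceeds the second
by more than `b / |X₀|`, the first moment method gives an injective system `t` with more than `b`
admissible points `a`, hence a box. Under the hypothesis on `b`, all `|Xᵢ| ≥ δ⁻¹ ^ (5 b ^ (r - 1))`,
and the required inequality reduces to `b (1 + (r - 1) (b - 1)) ≤ b ^ r` (Bernoulli) and `m < 2 ^ m`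
for `m = b ^ (r - 1)`.
-/

open Finset Function
open scoped BigOperators

section Expectation

theorem pow_expect_le_expect_pow {ι : Type*} [Fintype ι] [Nonempty ι] {f : ι → ℝ}
    (hf : ∀ i, 0 ≤ f i) (n : ℕ) : (𝔼 i, f i) ^ n ≤ 𝔼 i, f i ^ n := by
  have h := Real.pow_arith_mean_le_arith_mean_pow univ (fun _ ↦ (Fintype.card ι : ℝ)⁻¹) f
    (fun _ _ ↦ by positivity) (by simp) (fun i _ ↦ hf i) n
  simpa only [Fintype.expect_eq_sum_div_card, div_eq_inv_mul, mul_sum] using h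

theorem expect_boole {α K : Type*} [Fintype α] [Semifield K] [CharZero K] (p : α → Prop)
    [DecidablePred p] : 𝔼 a, (if p a then 1 else 0 : K) = ({a | p a} : Finset α).dens := by
  rw [← expect_indicator_one]
  simp [Set.indicator]

theorem exists_notMem_lt_of_add_dens_lt_expect {α : Type*} [Fintype α] {s : Finset α} {f : α → ℝ}
    {c : ℝ} (hf : ∀ a, f a ≤ 1) (hc : 0 ≤ c) (h : c + s.dens < 𝔼 a, f a) :
    ∃ a ∉ s, c < f a := by
  classical
  by_contra! hle
  have hbound (a) : f a ≤ c + if a ∈ s then 1 else 0 := by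
    split_ifs with ha
    · linarith [hf a]
    · linarith [hle a ha]
  obtain hα | hα := isEmpty_or_nonempty α
  · have hdens : (0 : ℝ) ≤ s.dens := by positivity
    rw [univ_eq_empty, expect_empty] at h
    linarith
  · refine h.not_ge ?_
    calc 𝔼 a, f a ≤ 𝔼 a, (c + if a ∈ s then 1 else 0) := expect_le_expect fun a _ ↦ hbound a
      _ = c + s.dens := by
          rw [expect_add_distrib, Fintype.expect_const, expect_boole, filter_univ_mem]

variable {k : ℕ}

theorem expect_pi_fin_succ {M : Type*} [AddCommMonoid M] [Module ℚ≥0 M] {X : Fin (k + 1) → Type*}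
    [∀ i, Fintype (X i)] (f : (∀ i, X i) → M) :
    𝔼 x, f x = 𝔼 a, 𝔼 x : ∀ i : Fin k, X i.succ, f (Fin.cons a x) := by
  rw [← Fintype.expect_equiv (Fin.consEquiv X) _ f fun _ ↦ rfl, ← univ_product_univ,
    expect_product]
  rfl

theorem prod_pi_fin_succ {M : Type*} [CommMonoid M] {X : Fin (k + 1) → Type*}
    [∀ i, Fintype (X i)] (f : (∀ i, X i) → M) :
    ∏ x, f x = ∏ x : ∀ i : Fin k, X i.succ, ∏ a, f (Fin.cons a x) := by
  rw [← Fintype.prod_equiv (Fin.consEquiv X) _ f fun _ ↦ rfl, Fintype.prod_prod_type_right]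
  rfl

theorem pow_expect_le_expect_prod (b : ℕ) {X : Fin k → Type*} [∀ i, Fintype (X i)]
    [∀ i, Nonempty (X i)] {f : (∀ i, X i) → ℝ} (hf : ∀ x, 0 ≤ f x) :
    (𝔼 x, f x) ^ b ^ k ≤
      𝔼 t : ∀ i, Fin b → X i, ∏ s : Fin k → Fin b, f fun i ↦ t i (s i) := by
  induction k with
  | zero => simp [Subsingleton.elim _ (default : ∀ i, X i)]
  | succ k ih =>
    have hprod (a : Fin b → X 0) (x : ∀ i : Fin k, X i.succ) :
        0 ≤ ∏ j, f (Fin.cons (a j) x) := prod_nonneg fun _ _ ↦ hf _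
    calc (𝔼 x, f x) ^ b ^ (k + 1)
        = ((𝔼 x : ∀ i : Fin k, X i.succ, 𝔼 a, f (Fin.cons a x)) ^ b) ^ b ^ k := by
          rw [expect_pi_fin_succ, expect_comm, pow_succ', pow_mul]
      _ ≤ (𝔼 x : ∀ i : Fin k, X i.succ, (𝔼 a, f (Fin.cons a x)) ^ b) ^ b ^ k := by
          gcongr
          · exact pow_nonneg (expect_nonneg fun _ _ ↦ expect_nonneg fun _ _ ↦ hf _) _
          · exact pow_expect_le_expect_pow (fun _ ↦ expect_nonneg fun _ _ ↦ hf _) b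
      _ = (𝔼 a : Fin b → X 0, 𝔼 x : ∀ i : Fin k, X i.succ, ∏ j, f (Fin.cons (a j) x)) ^ b ^ k := by
          rw [expect_comm]
          simp only [expect_pow, Fintype.piFinset_univ]
      _ ≤ 𝔼 a : Fin b → X 0, (𝔼 x : ∀ i : Fin k, X i.succ, ∏ j, f (Fin.cons (a j) x)) ^ b ^ k :=
          pow_expect_le_expect_pow (fun a ↦ expect_nonneg fun x _ ↦ hprod a x) _
      _ ≤ 𝔼 a : Fin b → X 0, 𝔼 t : ∀ i : Fin k, Fin b → X i.succ,
            ∏ s : Fin k → Fin b, ∏ j, f (Fin.cons (a j) fun i ↦ t i (s i)) :=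
          expect_le_expect fun a _ ↦ ih (hprod a)
      _ = 𝔼 t : ∀ i, Fin b → X i, ∏ s : Fin (k + 1) → Fin b, f fun i ↦ t i (s i) := by
          rw [expect_pi_fin_succ]
          refine expect_congr rfl fun a _ ↦ expect_congr rfl fun t _ ↦ ?_
          rw [prod_pi_fin_succ]
          refine prod_congr rfl fun s _ ↦ prod_congr rfl fun j _ ↦ congrArg f ?_
          exact funext <| Fin.cases rfl fun _ ↦ rfl

end Expectation

section NotInjective

theorem cast_card_offDiag {α R : Type*} [CommRing R] (s : Finset α) :
    (#s.offDiag : R) = #s * (#s - 1) := by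
  rw [offDiag_card, Nat.cast_sub (Nat.le_mul_self _), Nat.cast_mul, mul_sub_one]

variable {ι J : Type*} [Fintype ι] [DecidableEq ι] [Fintype J] [DecidableEq J] {X : ι → Type*}
  [∀ i, Fintype (X i)]

theorem dens_filter_apply_eq_le [∀ i, DecidableEq (X i)] (i : ι) {j l : J} (hj : j ≠ l) :
    ({t | t i j = t i l} : Finset (∀ i, J → X i)).dens ≤ (Fintype.card (X i) : ℚ≥0)⁻¹ := by
  set S : Finset (∀ i, J → X i) := {t | t i j = t i l}
  -- Overwriting the entry at `(i, j)` of `t ∈ S` loses nothing: its value survives at `(i, l)`.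
  have hleft : Set.LeftInvOn
      (fun h : ∀ i, J → X i ↦ (update h i (update (h i) j (h i l)), h i j))
      (fun p ↦ update p.1 i (update (p.1 i) j p.2)) (S ×ˢ (univ : Finset (X i)) : Finset _) := by
    rintro ⟨t, x⟩ htx
    have ht : t i j = t i l := by simpa [S] using htx
    simp [hj.symm, ← ht]
  have hcard : #S * Fintype.card (X i) ≤ Fintype.card (∀ i, J → X i) := by
    rw [← card_univ, ← card_univ, ← card_product]
    exact card_le_card_of_injOn _ (fun _ _ ↦ mem_univ _) hleft.injOn
  rw [dens]
  obtain hX | hX := isEmpty_or_nonempty (X i)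
  · have : IsEmpty (∀ i, J → X i) := ⟨fun t ↦ isEmptyElim (t i j)⟩
    simp
  · rw [← one_div, le_div_iff₀ (by positivity), div_mul_eq_mul_div]
    exact div_le_one_of_le₀ (by exact_mod_cast hcard) (by positivity)

theorem dens_filter_exists_not_injective_le
    [DecidablePred fun t : ∀ i, J → X i ↦ ∃ i, ¬ Injective (t i)] :
    ({t | ∃ i, ¬ Injective (t i)} : Finset (∀ i, J → X i)).dens ≤
      ∑ i, (#(univ : Finset J).offDiag : ℚ≥0) / Fintype.card (X i) := by
  classical
  have hunion : ({t | ∃ i, ¬ Injective (t i)} : Finset (∀ i, J → X i)) ⊆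
      univ.biUnion fun i ↦ univ.offDiag.biUnion fun p ↦ {t | t i p.1 = t i p.2} := by
    intro t ht
    obtain ⟨i, j, l, heq, hne⟩ : ∃ i j l, t i j = t i l ∧ j ≠ l := by
      simpa [Injective] using ht
    simp only [mem_biUnion, mem_offDiag, mem_filter_univ]
    exact ⟨i, mem_univ _, (j, l), ⟨mem_univ _, mem_univ _, hne⟩, heq⟩
  calc ({t | ∃ i, ¬ Injective (t i)} : Finset (∀ i, J → X i)).dens
      ≤ ∑ i, ∑ p ∈ univ.offDiag, ({t | t i p.1 = t i p.2} : Finset (∀ i, J → X i)).dens :=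
        (dens_le_dens hunion).trans <| dens_biUnion_le.trans <| sum_le_sum fun _ _ ↦ dens_biUnion_le
    _ ≤ ∑ i, ∑ _p ∈ (univ : Finset J).offDiag, (Fintype.card (X i) : ℚ≥0)⁻¹ := by
        gcongr with i _ p hp
        exact dens_filter_apply_eq_le i (mem_offDiag.1 hp).2.2
    _ = ∑ i, (#(univ : Finset J).offDiag : ℚ≥0) / Fintype.card (X i) := by
        simp only [sum_const, nsmul_eq_mul, div_eq_mul_inv]

end NotInjective

section Box

variable {k b : ℕ} {X : Fin (k + 1) → Type*} [∀ i, Fintype (X i)]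

/-- The points `a` of the coordinate `0` such that the box with sides `{a}` and `range (t i)`, for
`i : Fin k`, is contained in `Y`. The `i`-th tuple `t i` lives in the coordinate `i.succ`. -/
def boxFiber [∀ i, DecidableEq (X i)] (Y : Finset (∀ i, X i))
    (t : ∀ i : Fin k, Fin b → X i.succ) : Finset (X 0) :=
  {a | ∀ s : Fin k → Fin b, Fin.cons a (fun i ↦ t i (s i)) ∈ Y}

theorem exists_box_of_le_card_boxFiber [∀ i, DecidableEq (X i)] {Y : Finset (∀ i, X i)}
    {t : ∀ i : Fin k, Fin b → X i.succ} (ht : ∀ i, Injective (t i)) (hb : b ≤ #(boxFiber Y t)) :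
    ∃ Z : ∀ i, Finset (X i), (∀ i, #(Z i) = b) ∧ Fintype.piFinset Z ⊆ Y := by
  obtain ⟨Z₀, hZ₀, hcard⟩ := exists_subset_card_eq hb
  refine ⟨Fin.cons Z₀ fun i ↦ univ.image (t i), ?_, fun x hx ↦ ?_⟩
  · rw [Fin.forall_fin_succ]
    exact ⟨hcard, fun i ↦ by simp [card_image_of_injective _ (ht i)]⟩
  · rw [Fintype.mem_piFinset, Fin.forall_fin_succ] at hx
    obtain ⟨s, hs⟩ : ∃ s : Fin k → Fin b, ∀ i, t i (s i) = x i.succ := by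
      simpa [Classical.skolem] using hx.2
    have hmem := (mem_filter.1 (hZ₀ hx.1)).2 s
    simp_rw [hs] at hmem
    rwa [← Fin.cons_self_tail x]

theorem dens_pow_le_expect_dens_boxFiber [∀ i, DecidableEq (X i)] [∀ i, Nonempty (X i)]
    (Y : Finset (∀ i, X i)) (b : ℕ) :
    (Y.dens : ℝ) ^ b ^ k ≤
      𝔼 t : ∀ i : Fin k, Fin b → X i.succ, ((boxFiber Y t).dens : ℝ) := by
  set f : (∀ i, X i) → ℝ := fun x ↦ if x ∈ Y then 1 else 0
  have hf (x) : 0 ≤ f x := by unfold f; positivity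
  calc (Y.dens : ℝ) ^ b ^ k = (𝔼 a, 𝔼 x : ∀ i : Fin k, X i.succ, f (Fin.cons a x)) ^ b ^ k := by
        rw [← expect_pi_fin_succ, expect_boole, filter_univ_mem]
    _ ≤ 𝔼 a, (𝔼 x : ∀ i : Fin k, X i.succ, f (Fin.cons a x)) ^ b ^ k :=
        pow_expect_le_expect_pow (fun _ ↦ expect_nonneg fun _ _ ↦ hf _) _
    _ ≤ 𝔼 a, 𝔼 t : ∀ i : Fin k, Fin b → X i.succ,
          ∏ s : Fin k → Fin b, f (Fin.cons a fun i ↦ t i (s i)) :=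
        expect_le_expect fun _ _ ↦ pow_expect_le_expect_prod b fun _ ↦ hf _
    _ = 𝔼 t : ∀ i : Fin k, Fin b → X i.succ, ((boxFiber Y t).dens : ℝ) := by
        rw [expect_comm]
        simp only [f, prod_boole, mem_univ, true_imp_iff, expect_boole, boxFiber]

theorem exists_box_of_lt_dens_pow [∀ i, Nonempty (X i)] {Y : Finset (∀ i, X i)}
    (h : (b : ℝ) / Fintype.card (X 0) +
      ∑ i : Fin k, (b : ℝ) * (b - 1) / Fintype.card (X i.succ) < (Y.dens : ℝ) ^ b ^ k) :
    ∃ Z : ∀ i, Finset (X i), (∀ i, #(Z i) = b) ∧ Fintype.piFinset Z ⊆ Y := by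
  classical
  let bad : Finset (∀ i : Fin k, Fin b → X i.succ) := {t | ∃ i, ¬ Injective (t i)}
  have hbad : (bad.dens : ℝ) ≤ ∑ i : Fin k, (b : ℝ) * (b - 1) / Fintype.card (X i.succ) := by
    refine (NNRat.cast_le.2 dens_filter_exists_not_injective_le).trans_eq ?_
    push_cast
    rw [cast_card_offDiag, card_fin]
  obtain ⟨t, htbad, ht⟩ : ∃ t ∉ bad, (b : ℝ) / Fintype.card (X 0) < (boxFiber Y t).dens :=
    exists_notMem_lt_of_add_dens_lt_expect (fun _ ↦ mod_cast dens_le_one) (by positivity) <| by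
      linarith [dens_pow_le_expect_dens_boxFiber Y b]
  refine exists_box_of_le_card_boxFiber (t := t) (by simpa [bad] using htbad) ?_
  rw [nnratCast_dens, div_lt_div_iff_of_pos_right (by positivity)] at ht
  exact_mod_cast ht.le

end Box

section Numerics

variable {k b : ℕ}

theorem add_mul_lt_pow (hk : k ≠ 0) (b : ℕ) {y : ℝ} (hy : 2 ≤ y) :
    (b + k * (b * (b - 1)) : ℝ) < y ^ (4 * b ^ k) := by
  have hbernoulli : (1 + k * (b - 1) : ℝ) ≤ b ^ k :=
    one_add_mul_sub_le_pow (by linarith [b.cast_nonneg (α := ℝ)]) k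
  have hb : (b : ℝ) ≤ b ^ k := mod_cast Nat.le_self_pow hk b
  calc (b + k * (b * (b - 1)) : ℝ) = b * (1 + k * (b - 1)) := by ring
    _ ≤ b * b ^ k := by gcongr
    _ ≤ b ^ k * b ^ k := by gcongr
    _ < (2 : ℝ) ^ b ^ k * 2 ^ b ^ k := by
        exact_mod_cast Nat.mul_self_lt_mul_self Nat.lt_two_pow_self
    _ = 2 ^ (2 * b ^ k) := by ring
    _ ≤ y ^ (2 * b ^ k) := by gcongr
    _ ≤ y ^ (4 * b ^ k) := by gcongr <;> linarith

theorem pow_le_of_le_rpow_log_div {x y : ℝ} {c : ℕ} (hx : 1 < x) (hy : 1 ≤ y) (hk : k ≠ 0)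
    (hc : c ≠ 0) (hb : (b : ℝ) ≤ (Real.log y / (c * Real.log x)) ^ (k : ℝ)⁻¹) :
    x ^ (c * b ^ k) ≤ y := by
  have hlogx : 0 < Real.log x := Real.log_pos hx
  have hlogy : 0 ≤ Real.log y := Real.log_nonneg hy
  rw [Real.le_rpow_inv_iff_of_pos (by positivity) (by positivity) (by positivity),
    Real.rpow_natCast, le_div_iff₀ (by positivity)] at hb
  rw [← Real.log_le_log_iff (by positivity) (by positivity), Real.log_pow]
  push_cast
  linarith

theorem add_mul_div_lt_pow {δ n : ℝ} (hk : k ≠ 0) (hδ0 : 0 < δ) (hδ : δ ≤ 1 / 2) (hn : 1 ≤ n)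
    (hb : (b : ℝ) ≤ (Real.log n / (5 * Real.log δ⁻¹)) ^ (k : ℝ)⁻¹) :
    (b + k * (b * (b - 1))) / n < δ ^ b ^ k := by
  have hδinv : 2 ≤ δ⁻¹ := by simpa using inv_anti₀ hδ0 hδ
  have hpow : δ⁻¹ ^ (5 * b ^ k) ≤ n :=
    pow_le_of_le_rpow_log_div (by linarith) hn hk (by simp) hb
  rw [div_lt_iff₀ (by positivity)]
  calc (b + k * (b * (b - 1)) : ℝ) < δ⁻¹ ^ (4 * b ^ k) := add_mul_lt_pow hk b hδinv
    _ = δ ^ b ^ k * δ⁻¹ ^ (5 * b ^ k) := by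
        rw [show 5 * b ^ k = b ^ k + 4 * b ^ k by ring, pow_add, ← mul_assoc, ← mul_pow,
          mul_inv_cancel₀ hδ0.ne', one_pow, one_mul]
    _ ≤ δ ^ b ^ k * n := by gcongr

end Numerics

theorem find_box_general {r : ℕ} (hr : 2 ≤ r) (X : Fin r → Type*) [∀ i, Fintype (X i)]
    [∀ i, Nonempty (X i)] (Y : Set ((i : Fin r) → X i)) (δ : ℝ) (hδ0 : 0 < δ) (hδ : δ ≤ 1 / 2)
    (hY : δ * (Nat.card ((i : Fin r) → X i) : ℝ) ≤ (Y.ncard : ℝ)) (b : ℕ)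
    (hb : (b : ℝ) ≤ (Real.log (⨅ i : Fin r, (Fintype.card (X i) : ℝ)) /
      (5 * Real.log δ⁻¹)) ^ ((1 : ℝ) / ((r : ℝ) - 1))) :
    ∃ Z : (i : Fin r) → Finset (X i), (∀ i, (Z i).card = b) ∧
      ∀ x : (i : Fin r) → X i, (∀ i, x i ∈ Z i) → x ∈ Y := by
  classical
  obtain ⟨k, rfl⟩ : ∃ k, r = k + 1 := ⟨r - 1, by omega⟩
  set n : ℝ := ⨅ i, (Fintype.card (X i) : ℝ)
  have hn (i) : n ≤ Fintype.card (X i) := ciInf_le (Set.finite_range _).bddBelow i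
  have hn1 : 1 ≤ n := le_ciInf fun i ↦ mod_cast Fintype.card_pos
  have hdens : δ ≤ Y.toFinset.dens := by
    rwa [nnratCast_dens, ← Set.ncard_eq_toFinset_card', le_div_iff₀ (by positivity),
      ← Nat.card_eq_fintype_card]
  have hbb : (0 : ℝ) ≤ b * (b - 1) := Nat.cast_descFactorial_two ℝ b ▸ Nat.cast_nonneg _
  have hlt := calc
    (b : ℝ) / Fintype.card (X 0) + ∑ i : Fin k, (b : ℝ) * (b - 1) / Fintype.card (X i.succ)
      ≤ b / n + ∑ _i : Fin k, b * (b - 1) / n := by gcongr <;> apply hn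
    _ = (b + k * (b * (b - 1))) / n := by rw [sum_const, card_fin, nsmul_eq_mul]; ring
    _ < δ ^ b ^ k := add_mul_div_lt_pow (by omega) hδ0 hδ hn1 (by simpa using hb)
    _ ≤ (Y.toFinset.dens : ℝ) ^ b ^ k := by gcongr
  simpa [subset_iff] using exists_box_of_lt_dens_pow hlt

/-- Smith's Ramsey-type lemma: a subset `Y` of a product `X = ∏ᵢ Xᵢ` of density `≥ δ`
contains a combinatorial box `Z₁ × ⋯ × Z_r` with `|Zᵢ| = b`, provided
`b ≤ (log(minᵢ |Xᵢ|)/(5 log δ⁻¹))^{1/(r−1)}`. -/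
theorem find_box {r : ℕ} (hr : 2 ≤ r) (X : Fin r → Type*) [∀ i, Fintype (X i)]
    [∀ i, Nonempty (X i)] (Y : Set ((i : Fin r) → X i)) (δ : ℝ) (hδ0 : 0 < δ)
    (hδ1 : δ < 2 ^ (-(r : ℝ) - 1))
    (hY : δ * (Nat.card ((i : Fin r) → X i) : ℝ) ≤ (Y.ncard : ℝ))
    (b : ℕ) (hb1 : 1 ≤ b)
    (hb : (b : ℝ) ≤ (Real.log (⨅ i : Fin r, (Fintype.card (X i) : ℝ)) /
      (5 * Real.log δ⁻¹)) ^ ((1 : ℝ) / ((r : ℝ) - 1))) :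
    ∃ Z : (i : Fin r) → Finset (X i), (∀ i, (Z i).card = b) ∧
      ∀ x : (i : Fin r) → X i, (∀ i, x i ∈ Z i) → x ∈ Y := by
  have hδ : δ ≤ 2 ^ (-1 : ℝ) :=
    hδ1.le.trans <| Real.rpow_le_rpow_of_exponent_le one_le_two (by simp)
  exact find_box_general hr X Y δ hδ0 (by simpa [Real.rpow_neg_one] using hδ) hY b hb
end

section
/- Let X₁, …, X_r be nonempty finite sets with product X and let S ⊆ [r]. Then dim_{F₂} Add(X,S) = ∏_{i∈S} (|X_i| − 1) · ∏_{i∈[r]∖S} |X_i|. -/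
open scoped Classical

/-- `Cube(X,S)`: pairs of points of `X = ∏ᵢ Xᵢ` that agree in all coordinates outside `S`. -/
abbrev Cube {r : ℕ} (X : Fin r → Type*) (S : Finset (Fin r)) : Type _ :=
  {p : ((i : Fin r) → X i) × ((i : Fin r) → X i) // ∀ i ∉ S, p.1 i = p.2 i}

/-- `x̄(T)` for `x̄ ∈ Cube(X,S)` and `T ⊆ S`. -/
def cubeSel {r : ℕ} (X : Fin r → Type*) (S T : Finset (Fin r)) (x : Cube X S) :
    Set (Cube X T) :=
  {y | (∀ i ∈ S, i ∉ T → (y.1.1 i = x.1.1 i ∨ y.1.1 i = x.1.2 i)) ∧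
       ∀ i, i ∉ S \ T → (y.1.1 i = x.1.1 i ∧ y.1.2 i = x.1.2 i)}

/-- `x̄` is degenerate if `pr₁ π_i x̄ = pr₂ π_i x̄` for some `i ∈ S`. -/
def Cube.Degenerate {r : ℕ} {X : Fin r → Type*} {S : Finset (Fin r)} (x : Cube X S) : Prop :=
  ∃ i ∈ S, x.1.1 i = x.1.2 i

/-- The map `Σ : Map(X, F₂) → Map(Cube(X,S), F₂)`:
`ΣF(x̄) = ∑_{x ∈ x̄(∅)} F(x)` for non-degenerate `x̄`, and `0` for degenerate `x̄`. -/
noncomputable def SigmaMap {r : ℕ} (X : Fin r → Type*) [∀ i, Fintype (X i)]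
    (S : Finset (Fin r)) (F : ((i : Fin r) → X i) → ZMod 2) : Cube X S → ZMod 2 := fun x =>
  if Cube.Degenerate x then 0
  else ∑ y ∈ (Set.toFinite (cubeSel X S ∅ x)).toFinset, F y.1.1

/-- `Σ` as a linear map. -/
noncomputable def SigmaLin {r : ℕ} (X : Fin r → Type*) [∀ i, Fintype (X i)]
    (S : Finset (Fin r)) :
    (((i : Fin r) → X i) → ZMod 2) →ₗ[ZMod 2] (Cube X S → ZMod 2) where
  toFun := SigmaMap X S
  map_add' F G := by
    funext x
    by_cases h : Cube.Degenerate x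
    · simp [SigmaMap, h]
    · simp [SigmaMap, h, Finset.sum_add_distrib]
  map_smul' c F := by
    funext x
    by_cases h : Cube.Degenerate x
    · simp [SigmaMap, h]
    · simp [SigmaMap, h, Finset.mul_sum]

/-- `Add(X,S)`: the image of `Σ`. -/
noncomputable def AddSubspace {r : ℕ} (X : Fin r → Type*) [∀ i, Fintype (X i)]
    (S : Finset (Fin r)) : Submodule (ZMod 2) (Cube X S → ZMod 2) :=
  LinearMap.range (SigmaLin X S)

/-!
Fix a base point `a`. In characteristic two the sum of `F` over the vertices of the cube spanned by
`x` and `y` already vanishes when `x` and `y` share a coordinate in `S`, so `Σ` is this vertex sum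
at every cube, degenerate or not. Replacing `F` by its vertex sum `F_a` against `a` does not change
`ΣF`, since every term other than `F` itself is independent of some coordinate in `S`. Hence `ΣF`
is determined by its values at the cubes spanned by `x` and `a`, which are the values `F_a x`; these
are zero when `x` meets `a` in a coordinate of `S`. Conversely, a function `F` vanishing at all such
`x` satisfies `F_a = F`, so on the remaining points the values are arbitrary, and their number is
the dimension.
-/

section VertexSum

variable {ι : Type*} [DecidableEq ι] {X : ι → Type*} {M : Type*}

section AddCommMonoid

variable [AddCommMonoid M]

/-- The sum of `F` over the vertices of the cube with opposite corners `x` and `y` and directions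
`S`. The vertex indexed by `U ⊆ S` takes its coordinates in `U` from `y` and all others from `x`;
a vertex is counted repeatedly when `x` and `y` share coordinates in `S`. -/
def vertexSum (S : Finset ι) (F : (∀ i, X i) → M) (x y : ∀ i, X i) : M :=
  ∑ U ∈ S.powerset, F (U.piecewise y x)

lemma vertexSum_piecewise_right (S : Finset ι) (F : (∀ i, X i) → M) (x y : ∀ i, X i) :
    vertexSum S F x (S.piecewise y x) = vertexSum S F x y :=
  Finset.sum_congr rfl fun _ hU ↦ by
    rw [Finset.piecewise_piecewise_of_subset_left (Finset.mem_powerset.mp hU)]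

lemma vertexSum_eq_self_of_eq_zero {S : Finset ι} {F : (∀ i, X i) → M} {a : ∀ i, X i}
    (hF : ∀ x, ∀ i ∈ S, x i = a i → F x = 0) (x : ∀ i, X i) : vertexSum S F x a = F x := by
  rw [vertexSum, Finset.sum_eq_single_of_mem ∅ (Finset.empty_mem_powerset S),
    Finset.piecewise_empty]
  intro U hU hne
  obtain ⟨i, hi⟩ := Finset.nonempty_iff_ne_empty.mpr hne
  exact hF _ i (Finset.mem_powerset.mp hU hi) (U.piecewise_eq_of_mem _ _ hi)

end AddCommMonoid

variable [AddCommGroup M] [Module (ZMod 2) M]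

lemma sum_powerset_eq_zero_of_insert_eq {S : Finset ι} {i : ι} (hi : i ∈ S) {f : Finset ι → M}
    (hf : ∀ U, f (insert i U) = f U) : ∑ U ∈ S.powerset, f U = 0 := by
  rw [← Finset.insert_erase hi, Finset.sum_powerset_insert (Finset.notMem_erase i S)]
  simp only [hf, ZModModule.add_self]

lemma vertexSum_eq_zero_of_coord_eq {S : Finset ι} (F : (∀ i, X i) → M) {x y : ∀ i, X i} {i : ι}
    (hi : i ∈ S) (hxy : x i = y i) : vertexSum S F x y = 0 := by
  refine sum_powerset_eq_zero_of_insert_eq hi fun U ↦ ?_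
  have h_coord : U.piecewise y x i = y i := by
    by_cases hU : i ∈ U <;> simp [hU, hxy]
  rw [Finset.piecewise_insert, ← h_coord, Function.update_eq_self]

lemma vertexSum_eq_zero_of_update_eq {S : Finset ι} {F : (∀ i, X i) → M} {i : ι} (hi : i ∈ S)
    (hF : ∀ z v, F (Function.update z i v) = F z) (x y : ∀ i, X i) : vertexSum S F x y = 0 :=
  sum_powerset_eq_zero_of_insert_eq hi fun U ↦ by rw [Finset.piecewise_insert, hF]

lemma vertexSum_vertexSum (S : Finset ι) (F : (∀ i, X i) → M) (a x y : ∀ i, X i) :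
    vertexSum S (fun z ↦ vertexSum S F z a) x y = vertexSum S F x y := by
  calc vertexSum S (fun z ↦ vertexSum S F z a) x y
      = ∑ V ∈ S.powerset, vertexSum S (fun z ↦ F (V.piecewise a z)) x y := Finset.sum_comm
    _ = vertexSum S (fun z ↦ F ((∅ : Finset ι).piecewise a z)) x y := by
        refine Finset.sum_eq_single_of_mem ∅ (Finset.empty_mem_powerset S) fun V hV hne ↦ ?_
        obtain ⟨i, hi⟩ := Finset.nonempty_iff_ne_empty.mpr hne
        refine vertexSum_eq_zero_of_update_eq (Finset.mem_powerset.mp hV hi) (fun z v ↦ ?_) x y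
        refine congrArg F (V.piecewise_congr (fun _ _ ↦ rfl) fun j hj ↦ ?_)
        exact Function.update_of_ne (ne_of_mem_of_not_mem hi hj).symm v z
    _ = vertexSum S F x y := by simp only [Finset.piecewise_empty]

end VertexSum

section OffBase

variable {ι : Type*} {X : ι → Type*}

/-- The points that differ from the base point `a` in every coordinate belonging to `S`. They index
the coordinates on `Add(X,S)` given by evaluation at the cubes spanned by `x` and `a`. -/
def offBase (S : Finset ι) (a : ∀ i, X i) : Set (∀ i, X i) :=
  {x | ∀ i ∈ S, x i ≠ a i}

lemma ncard_offBase [DecidableEq ι] [Fintype ι] [∀ i, Fintype (X i)] (S : Finset ι)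
    (a : ∀ i, X i) :
    (offBase S a).ncard =
      (∏ i ∈ S, (Fintype.card (X i) - 1)) * ∏ i ∈ Finset.univ \ S, Fintype.card (X i) := by
  have h_pi : offBase S a =
      Fintype.piFinset fun i ↦ if i ∈ S then {a i}ᶜ else Finset.univ := by
    ext x
    rw [Finset.mem_coe, Fintype.mem_piFinset]
    refine forall_congr' fun i ↦ ?_
    split_ifs with hi <;> simp [hi]
  rw [h_pi, Set.ncard_coe_finset, Fintype.card_piFinset]
  simp only [apply_ite Finset.card, Finset.card_compl, Finset.card_singleton, Finset.card_univ,
    Finset.prod_ite, Finset.filter_mem_eq_inter, Finset.univ_inter, Finset.filter_notMem_eq_sdiff]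

end OffBase

section Cube

variable {r : ℕ} {X : Fin r → Type*} {S : Finset (Fin r)}

/-- A point of `X`, regarded as an element of `Cube(X,∅)`. -/
def Cube.ofPoint (z : ∀ i, X i) : Cube X ∅ :=
  ⟨(z, z), fun _ _ ↦ rfl⟩

lemma Cube.ofPoint_fst (y : Cube X ∅) : Cube.ofPoint y.1.1 = y :=
  Subtype.ext <| Prod.ext rfl <| funext fun i ↦ y.2 i (Finset.notMem_empty i)

lemma ofPoint_mem_cubeSel_empty {x : Cube X S} {z : ∀ i, X i} :
    Cube.ofPoint z ∈ cubeSel X S ∅ x ↔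
      (∀ i ∈ S, z i = x.1.1 i ∨ z i = x.1.2 i) ∧ ∀ i ∉ S, z i = x.1.1 i := by
  simp only [cubeSel, Cube.ofPoint, Set.mem_ofPred_eq, Finset.notMem_empty, not_false_eq_true,
    forall_true_left, Finset.sdiff_empty]
  refine and_congr_right fun _ ↦ forall₂_congr fun i hi ↦ ?_
  rw [x.2 i hi, and_self]

lemma cubeSel_empty_eq_image (x : Cube X S) :
    cubeSel X S ∅ x =
      (fun U : Finset (Fin r) ↦ Cube.ofPoint (U.piecewise x.1.2 x.1.1)) '' S.powerset := by
  ext y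
  rw [← y.ofPoint_fst, ofPoint_mem_cubeSel_empty]
  constructor
  · rintro ⟨h_mem, h_notMem⟩
    refine ⟨{i ∈ S | y.1.1 i = x.1.2 i}, Finset.mem_powerset.mpr (Finset.filter_subset _ S),
      congrArg Cube.ofPoint (funext fun i ↦ ?_)⟩
    by_cases hi : i ∈ S
    · by_cases hy : y.1.1 i = x.1.2 i
      · simp [hi, hy]
      · simpa [Finset.piecewise, hi, hy] using ((h_mem i hi).resolve_right hy).symm
    · simpa [Finset.piecewise, hi] using (h_notMem i hi).symm
  · rintro ⟨U, hU, hUy⟩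
    have h_point : U.piecewise x.1.2 x.1.1 = y.1.1 := congrArg (fun c : Cube X ∅ ↦ c.1.1) hUy
    rw [← h_point]
    have h_subset : U ⊆ S := Finset.mem_powerset.mp hU
    exact ⟨fun i _ ↦ U.piecewise_cases _ _ (fun v ↦ v = x.1.1 i ∨ v = x.1.2 i)
        (Or.inr rfl) (Or.inl rfl),
      fun i hi ↦ U.piecewise_eq_of_notMem _ _ fun hiU ↦ hi (h_subset hiU)⟩

lemma injOn_ofPoint_piecewise {x : Cube X S} (hx : ¬ x.Degenerate) :
    Set.InjOn (fun U : Finset (Fin r) ↦ Cube.ofPoint (U.piecewise x.1.2 x.1.1)) S.powerset := by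
  have h_mem_iff {U : Finset (Fin r)} {i : Fin r} (hi : i ∈ S) :
      i ∈ U ↔ U.piecewise x.1.2 x.1.1 i = x.1.2 i := by
    by_cases hU : i ∈ U
    · simp [hU]
    · simpa [hU] using fun h ↦ hx ⟨i, hi, h⟩
  intro U hU V hV hUV
  have h_point : U.piecewise x.1.2 x.1.1 = V.piecewise x.1.2 x.1.1 :=
    congrArg (fun c : Cube X ∅ ↦ c.1.1) hUV
  ext i
  by_cases hi : i ∈ S
  · rw [h_mem_iff hi, h_mem_iff hi, h_point]
  · exact iff_of_false (fun h ↦ hi (Finset.mem_powerset.mp hU h))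
      (fun h ↦ hi (Finset.mem_powerset.mp hV h))

variable [∀ i, Fintype (X i)]

lemma sigmaLin_apply (F : (∀ i, X i) → ZMod 2) (x : Cube X S) :
    SigmaLin X S F x = vertexSum S F x.1.1 x.1.2 := by
  change SigmaMap X S F x = _
  unfold SigmaMap
  split_ifs with hx
  · obtain ⟨i, hi, h_eq⟩ := hx
    exact (vertexSum_eq_zero_of_coord_eq F hi h_eq).symm
  · have h_image : (Set.toFinite (cubeSel X S ∅ x)).toFinset =
        S.powerset.image fun U ↦ Cube.ofPoint (U.piecewise x.1.2 x.1.1) := by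
      rw [← Finset.coe_inj, Set.Finite.coe_toFinset, Finset.coe_image, cubeSel_empty_eq_image]
    rw [h_image, Finset.sum_image (injOn_ofPoint_piecewise hx)]
    rfl

/-- Restriction of a function on `Cube(X,S)` to the cubes with one corner `x ∈ offBase S a` and
the opposite corner obtained from `x` by moving the coordinates in `S` to those of `a`. -/
def baseRestrict (S : Finset (Fin r)) (a : ∀ i, X i) :
    (Cube X S → ZMod 2) →ₗ[ZMod 2] (offBase S a → ZMod 2) :=
  LinearMap.funLeft (ZMod 2) (ZMod 2) fun x ↦
    ⟨(x, S.piecewise a x), fun _ hi ↦ (S.piecewise_eq_of_notMem _ _ hi).symm⟩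

lemma baseRestrict_sigmaLin (a : ∀ i, X i) (F : (∀ i, X i) → ZMod 2) (x : offBase S a) :
    baseRestrict S a (SigmaLin X S F) x = vertexSum S F x a :=
  (sigmaLin_apply F _).trans (vertexSum_piecewise_right S F x a)

lemma sigmaLin_eq_zero_of_baseRestrict_eq_zero {a : ∀ i, X i} {F : (∀ i, X i) → ZMod 2}
    (hF : baseRestrict S a (SigmaLin X S F) = 0) : SigmaLin X S F = 0 := by
  have h_vertexSum (z : ∀ i, X i) : vertexSum S F z a = 0 := by
    by_cases hz : z ∈ offBase S a
    · rw [← baseRestrict_sigmaLin a F ⟨z, hz⟩, hF, Pi.zero_apply]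
    · obtain ⟨i, hi, h_eq⟩ : ∃ i ∈ S, z i = a i := by simpa [offBase] using hz
      exact vertexSum_eq_zero_of_coord_eq F hi h_eq
  ext x
  rw [sigmaLin_apply, ← vertexSum_vertexSum S F a]
  simp only [h_vertexSum]
  exact Finset.sum_const_zero

lemma baseRestrict_domRestrict_injective (S : Finset (Fin r)) (a : ∀ i, X i) :
    Function.Injective ((baseRestrict S a).domRestrict (AddSubspace X S)) := by
  rw [injective_iff_map_eq_zero]
  rintro ⟨_, F, rfl⟩ hF
  exact Subtype.ext (sigmaLin_eq_zero_of_baseRestrict_eq_zero hF)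

lemma baseRestrict_domRestrict_surjective (S : Finset (Fin r)) (a : ∀ i, X i) :
    Function.Surjective ((baseRestrict S a).domRestrict (AddSubspace X S)) := by
  intro f
  let F : (∀ i, X i) → ZMod 2 := Function.extend Subtype.val f 0
  have hF (x : ∀ i, X i) (i : Fin r) (hi : i ∈ S) (h_eq : x i = a i) : F x = 0 :=
    Function.extend_apply' _ _ _ fun ⟨z, hz⟩ ↦ z.2 i hi (hz ▸ h_eq)
  refine ⟨⟨SigmaLin X S F, F, rfl⟩, funext fun x ↦ ?_⟩
  calc baseRestrict S a (SigmaLin X S F) x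
      = vertexSum S F x a := baseRestrict_sigmaLin a F x
    _ = F x := vertexSum_eq_self_of_eq_zero hF x
    _ = f x := Subtype.val_injective.extend_apply f 0 x

end Cube

/-- `dim_{F₂} Add(X,S) = ∏_{i∈S} (|Xᵢ| − 1) ∏_{i∉S} |Xᵢ|`. -/
theorem addSubspace_finrank {r : ℕ} (X : Fin r → Type*) [∀ i, Fintype (X i)]
    [∀ i, Nonempty (X i)] (S : Finset (Fin r)) :
    Module.finrank (ZMod 2) (AddSubspace X S) =
      (∏ i ∈ S, (Fintype.card (X i) - 1)) * ∏ i ∈ Finset.univ \ S, Fintype.card (X i) := by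
  let a : ∀ i, X i := fun i ↦ Classical.arbitrary (X i)
  let e : AddSubspace X S ≃ₗ[ZMod 2] (offBase S a → ZMod 2) :=
    LinearEquiv.ofBijective ((baseRestrict S a).domRestrict (AddSubspace X S))
      ⟨baseRestrict_domRestrict_injective S a, baseRestrict_domRestrict_surjective S a⟩
  rw [e.finrank_eq, Module.finrank_fintype_fun_eq_card, ← Nat.card_eq_fintype_card,
    Nat.card_coe_set_eq, ncard_offBase]
end

section
/- Let (X,P) be a prebox and let 0 ≤ k₀ ≤ k₁ ≤ k₂ ≤ r be integers with 2^{k₀+|P|+1}·k₁² < k₂. Then for every x ∈ X: Σ over all maps a : M_r ⊔ M_{r,P} → F₂ of ( k₂!/2^{C(k₀,k₁)+k₁·|P|} − #{σ ∈ 𝒫_r(k₂) : x ∈ X^trun_{k₀,k₁}(σ,a)} )² is at most (2^{k₀+|P|+1}·k₁²/k₂) · 2^{−2·C(k₀,k₁) − 2·k₁·|P| + |M_r ⊔ M_{r,P}|} · (k₂!)². -/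
open scoped Classical

/-- `ι : F₂ ≃ {±1}`. -/
def iotaSign (e : ZMod 2) : ℤ := if e = 0 then 1 else -1

/-- The index set `M_r = {(i,j) : 1 ≤ i < j ≤ r}`, encoded with `0`-based
`Fin r` indices (index `i : Fin r` stands for the paper's `i + 1`). -/
abbrev MrIdx (r : ℕ) : Type := {q : Fin r × Fin r // q.1 < q.2}

/-- The index set `M_{r,P} = [r] × P`. -/
abbrev MrPIdx (r : ℕ) (P : Finset ℕ) : Type := Fin r × {p : ℕ // p ∈ P}

/-- A prebox `(X, P)`: pairwise disjoint finite sets `P, X₁, …, X_r` of primes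
`≡ 1, 2 (mod 4)`, with `Xᵢ ⊆ (sᵢ, tᵢ]`, `P ⊆ (1, s₁]` and `2 < s₁ < t₁ < s₂ < ⋯ < s_r < t_r`.
The sets `Xᵢ`, `sᵢ`, `tᵢ` are indexed by `1 ≤ i ≤ r`. -/
structure Prebox (r : ℕ) where
  X : ℕ → Finset ℕ
  P : Finset ℕ
  s : ℕ → ℝ
  t : ℕ → ℝ
  prime_X : ∀ i ∈ Finset.Icc 1 r, ∀ p ∈ X i, p.Prime ∧ (p % 4 = 1 ∨ p % 4 = 2)
  prime_P : ∀ p ∈ P, p.Prime ∧ (p % 4 = 1 ∨ p % 4 = 2)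
  disj_X : ∀ i ∈ Finset.Icc 1 r, ∀ j ∈ Finset.Icc 1 r, i ≠ j → Disjoint (X i) (X j)
  disj_XP : ∀ i ∈ Finset.Icc 1 r, Disjoint (X i) P
  two_lt_s : 1 ≤ r → (2 : ℝ) < s 1
  s_lt_t : ∀ i ∈ Finset.Icc 1 r, s i < t i
  t_lt_s : ∀ i ∈ Finset.Icc 1 r, ∀ j ∈ Finset.Icc 1 r, i < j → t i < s j
  X_sub : ∀ i ∈ Finset.Icc 1 r, ∀ p ∈ X i, s i < (p : ℝ) ∧ (p : ℝ) ≤ t i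
  P_sub : ∀ p ∈ P, (1 : ℝ) < (p : ℝ) ∧ (1 ≤ r → (p : ℝ) ≤ s 1)

/-- Symmetrized access `a(i,j) = a(j,i)` to a map on `M_r ⊔ M_{r,P}`. -/
def asym {r : ℕ} {P : Finset ℕ} (a : MrIdx r ⊕ MrPIdx r P → ZMod 2) (i j : Fin r) : ZMod 2 :=
  if h : i < j then a (Sum.inl ⟨(i, j), h⟩)
  else if h' : j < i then a (Sum.inl ⟨(j, i), h'⟩) else 0

/-- `C(k₀,k₁) = (k₀² − k₀)/2 + k₀(k₁ − k₀)`. -/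
def Ccount (k₀ k₁ : ℕ) : ℕ := (k₀ ^ 2 - k₀) / 2 + k₀ * (k₁ - k₀)

/-- Membership of the point `x` in `X^trun_{k₀,k₁}(σ,a)` (paper index `i` = `(i : Fin r) + 1`):
`(xᵢ/xⱼ) = ι(a(σ⁻¹ i, σ⁻¹ j))` for all `i, j ∈ [k₁]` with `σ⁻¹ i < σ⁻¹ j` and `min(i,j) ≤ k₀`,
and `(xᵢ/p) = ι(a(σ⁻¹ i, p))` for all `(i, p) ∈ [k₁] × P`. -/
def InTrun {r : ℕ} {P : Finset ℕ} (x : Fin r → ℕ) (k₀ k₁ : ℕ)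
    (σ : Equiv.Perm (Fin r)) (a : MrIdx r ⊕ MrPIdx r P → ZMod 2) : Prop :=
  (∀ i j : Fin r, (i : ℕ) < k₁ → (j : ℕ) < k₁ → σ⁻¹ i < σ⁻¹ j →
     min ((i : ℕ) + 1) ((j : ℕ) + 1) ≤ k₀ →
     jacobiSym (x i) (x j) = iotaSign (asym a (σ⁻¹ i) (σ⁻¹ j))) ∧
  (∀ i : Fin r, (i : ℕ) < k₁ → ∀ p : {p : ℕ // p ∈ P},
     jacobiSym (x i) (p : ℕ) = iotaSign (a (Sum.inr (σ⁻¹ i, p))))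

/-!
Each `σ` imposes on `a` exactly `D = C(k₀,k₁) + k₁|P|` coordinate equations, so, expanding the
square, the first moment is exact and the pair `(σ, τ)` deviates from independence by a factor at
most `2 ^ |D_σ ∩ D_τ|`, where `D_σ`, `D_τ` are the sets of constrained coordinates. Every common
coordinate involves a common index of `σ⁻¹[k₁]` and `τ⁻¹[k₁]`, and each such index is responsible
for at most `k₀ + |P|` of them, so this factor is at most `Q ^ |σ⁻¹[k₁] ∩ τ⁻¹[k₁]|` with
`Q = 2 ^ (k₀ + |P|)`. Writing `Q ^ |S| = ∑_{U ⊆ S} (Q - 1) ^ |U|` and using that a set `U ⊆ [k₂]`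
lies in `τ⁻¹[k₁]` for a proportion at most `(k₁ / k₂) ^ |U|` of the `τ`, the average of the factor
is at most `(1 + (Q - 1) k₁ / k₂) ^ k₁ ≤ 1 + 2 Q k₁² / k₂`.
-/

open Finset Equiv
open scoped Nat

section SecondMoment

lemma sum_sub_card_filter_sq {Ω A : Type*} [Fintype A] (G : Finset Ω) (R : Ω → A → Prop) (c : ℝ) :
    ∑ a, (c - #{σ ∈ G | R σ a}) ^ 2 =
      Fintype.card A * c ^ 2 - 2 * c * ∑ σ ∈ G, (#{a | R σ a} : ℝ) +
        ∑ σ ∈ G, ∑ τ ∈ G, (#{a | R σ a ∧ R τ a} : ℝ) := by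
  have first_moment : ∑ a, (#{σ ∈ G | R σ a} : ℝ) = ∑ σ ∈ G, (#{a | R σ a} : ℝ) := by
    simp only [← sum_boole]
    exact sum_comm
  have second_moment :
      ∑ a, (#{σ ∈ G | R σ a} : ℝ) ^ 2 = ∑ σ ∈ G, ∑ τ ∈ G, (#{a | R σ a ∧ R τ a} : ℝ) := by
    simp only [← sum_boole, sq, sum_mul_sum, ite_and, ite_zero_mul, one_mul]
    rw [sum_comm]
    exact sum_congr rfl fun σ _ ↦ sum_comm
  simp only [sub_sq, sum_add_distrib, sum_sub_distrib, sum_const, card_univ, nsmul_eq_mul,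
    ← mul_sum, first_moment, second_moment]

variable {I β Ω : Type*} [Fintype I] [DecidableEq I] [Fintype β]

lemma card_eqOn_mul_pow (J : Finset I) (v : I → β) :
    #{a : I → β | Set.EqOn a v J} * Fintype.card β ^ #J = Fintype.card β ^ Fintype.card I := by
  have as_pi : ({a : I → β | Set.EqOn a v J} : Finset (I → β)) =
      Fintype.piFinset fun c ↦ if c ∈ J then {v c} else univ := by
    ext a
    simp only [mem_filter, mem_univ, true_and, Fintype.mem_piFinset, Set.EqOn, mem_coe]
    refine forall_congr' fun c ↦ ?_
    by_cases hc : c ∈ J <;> simp [hc]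
  rw [as_pi, Fintype.card_piFinset, ← card_add_card_compl J, pow_add, mul_comm]
  simp [apply_ite, prod_ite, filter_not, ← compl_eq_univ_sdiff]

lemma card_eqOn_and_eqOn_mul_pow_le (J K : Finset I) (v w : I → β) :
    #{a : I → β | Set.EqOn a v J ∧ Set.EqOn a w K} * Fintype.card β ^ (#J + #K) ≤
      Fintype.card β ^ Fintype.card I * Fintype.card β ^ #(J ∩ K) := by
  have glue : ({a : I → β | Set.EqOn a v J ∧ Set.EqOn a w K} : Finset (I → β)) ⊆
      ({a : I → β | Set.EqOn a (J.piecewise v w) ↑(J ∪ K)} : Finset (I → β)) := by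
    intro a
    simp only [mem_filter, mem_univ, true_and]
    rintro ⟨hv, hw⟩ c hc
    by_cases hJ : c ∈ J
    · simpa [hJ] using hv hJ
    · simpa [hJ] using hw ((mem_union.1 hc).resolve_left hJ)
  rw [← card_union_add_card_inter, pow_add, ← mul_assoc,
    ← card_eqOn_mul_pow (J ∪ K) (J.piecewise v w)]
  gcongr

lemma sum_sub_card_eqOn_sq_le [Nonempty β] (G : Finset Ω) (J : Ω → Finset I) (v : Ω → I → β)
    {d : ℕ} (hJ : ∀ σ ∈ G, #(J σ) = d) :
    ∑ a : I → β,
        ((#G : ℝ) / (Fintype.card β) ^ d - #{σ ∈ G | Set.EqOn a (v σ) (J σ)}) ^ 2 ≤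
      (Fintype.card β : ℝ) ^ Fintype.card I / (Fintype.card β) ^ (2 * d) *
        (∑ σ ∈ G, ∑ τ ∈ G, (Fintype.card β : ℝ) ^ #(J σ ∩ J τ) - #G ^ 2) := by
  set q := (Fintype.card β : ℝ)
  have hq_pos : 0 < q := Nat.cast_pos.2 Fintype.card_pos
  set N := Fintype.card I
  have single (σ : Ω) (hσ : σ ∈ G) :
      (#{a : I → β | Set.EqOn a (v σ) (J σ)} : ℝ) = q ^ N / q ^ d := by
    rw [eq_div_iff (by positivity), ← hJ σ hσ]
    simp only [q, N]
    exact_mod_cast card_eqOn_mul_pow (J σ) (v σ)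
  have pair (σ : Ω) (hσ : σ ∈ G) (τ : Ω) (hτ : τ ∈ G) :
      (#{a : I → β | Set.EqOn a (v σ) (J σ) ∧ Set.EqOn a (v τ) (J τ)} : ℝ) ≤
        q ^ N / q ^ (2 * d) * q ^ #(J σ ∩ J τ) := by
    rw [div_mul_eq_mul_div, le_div_iff₀ (by positivity), two_mul]
    nth_rw 1 [← hJ σ hσ]
    rw [← hJ τ hτ]
    simp only [q, N]
    exact_mod_cast card_eqOn_and_eqOn_mul_pow_le (J σ) (J τ) (v σ) (v τ)
  have card_functions : (Fintype.card (I → β) : ℝ) = q ^ N := by rw [Fintype.card_fun, Nat.cast_pow]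
  rw [sum_sub_card_filter_sq, card_functions, sum_congr rfl single, sum_const, nsmul_eq_mul]
  calc q ^ N * (#G / q ^ d) ^ 2 - 2 * (#G / q ^ d) * (#G * (q ^ N / q ^ d)) +
        ∑ σ ∈ G, ∑ τ ∈ G, (#{a : I → β | Set.EqOn a (v σ) (J σ) ∧ Set.EqOn a (v τ) (J τ)} : ℝ)
      ≤ q ^ N * (#G / q ^ d) ^ 2 - 2 * (#G / q ^ d) * (#G * (q ^ N / q ^ d)) +
        ∑ σ ∈ G, ∑ τ ∈ G, q ^ N / q ^ (2 * d) * q ^ #(J σ ∩ J τ) := by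
        gcongr with σ hσ τ hτ
        exact pair σ hσ τ hτ
    _ = q ^ N / q ^ (2 * d) * (∑ σ ∈ G, ∑ τ ∈ G, q ^ #(J σ ∩ J τ) - #G ^ 2) := by
        simp only [← mul_sum]
        field_simp
        ring

end SecondMoment

section PermutationCounts

variable {α : Type*} [DecidableEq α]

lemma mem_permsOfFinset_iff_fixes {A : Finset α} {τ : Perm α} :
    τ ∈ permsOfFinset A ↔ ∀ i ∉ A, τ i = i := by
  rw [mem_perms_of_finset_iff]
  exact ⟨fun h i ↦ not_imp_comm.1 h, fun h i ↦ not_imp_comm.1 (h i)⟩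

lemma card_permsOfFinset_mapsTo_insert {A T S : Finset α} {y : α} (hyA : y ∈ A) (hyT : y ∉ T)
    (hS : S ⊆ A) :
    #{τ ∈ permsOfFinset A | ∀ u ∈ insert y T, τ u ∈ S} =
      ∑ s ∈ S, #{τ ∈ permsOfFinset (A.erase y) |
        ∀ u ∈ T, τ u ∈ (S.erase s).map (swap y s).toEmbedding} := by
  have eval_mem (τ : Perm α) (hτ : τ ∈ {τ ∈ permsOfFinset A | ∀ u ∈ insert y T, τ u ∈ S}) :
      τ y ∈ S := (mem_filter.1 hτ).2 y (mem_insert_self y T)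
  rw [card_eq_sum_card_fiberwise eval_mem]
  refine sum_congr rfl fun s hs ↦ ?_
  have swap_fixes {i : α} (hi : i ∉ A) : swap y s i = i :=
    swap_apply_of_ne_of_ne (by grind) (by grind)
  -- Composing with the transposition `(y s)` turns a permutation sending `y` to `s` into one
  -- fixing `y`.
  refine card_nbij' (swap y s * ·) (swap y s * ·) ?_ ?_
    (fun _ _ ↦ swap_mul_self_mul _ _ _) (fun _ _ ↦ swap_mul_self_mul _ _ _)
  · intro τ hτ
    simp only [coe_filter, Set.mem_ofPred_eq, mem_filter, mem_permsOfFinset_iff_fixes,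
      forall_mem_insert, mem_erase, Perm.mul_apply, mem_map_equiv, symm_swap, swap_apply_self]
      at hτ ⊢
    obtain ⟨⟨fixes, hy, hT⟩, rfl⟩ := hτ
    refine ⟨fun i hi ↦ ?_, fun u hu ↦ ⟨fun h ↦ ?_, hT u hu⟩⟩
    · obtain rfl | hiy := eq_or_ne i y
      · exact swap_apply_right _ _
      · have hiA : i ∉ A := fun hiA ↦ hi ⟨hiy, hiA⟩
        rw [fixes i hiA, swap_fixes hiA]
    · exact hyT (τ.injective h ▸ hu)
  · intro τ hτ
    simp only [coe_filter, Set.mem_ofPred_eq, mem_filter, mem_permsOfFinset_iff_fixes,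
      forall_mem_insert, mem_erase, Perm.mul_apply, mem_map_equiv, symm_swap] at hτ ⊢
    obtain ⟨fixes, hT⟩ := hτ
    have fixes_y : τ y = y := fixes y (by simp)
    refine ⟨⟨fun i hi ↦ ?_, ?_, fun u hu ↦ (hT u hu).2⟩, ?_⟩
    · rw [fixes i (by simp [hi]), swap_fixes hi]
    · rwa [fixes_y, swap_apply_left]
    · rw [fixes_y, swap_apply_left]

lemma card_permsOfFinset_mapsTo {A T S : Finset α} (hT : T ⊆ A) (hS : S ⊆ A) :
    #{τ ∈ permsOfFinset A | ∀ u ∈ T, τ u ∈ S} = (#A - #T)! * (#S).descFactorial #T := by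
  induction T using Finset.induction_on generalizing A S with
  | empty => simp [card_perms_of_finset]
  | insert y T hyT ih =>
    obtain ⟨hyA, hTA⟩ := insert_subset_iff.1 hT
    have count (s : α) (hs : s ∈ S) : #{τ ∈ permsOfFinset (A.erase y) |
        ∀ u ∈ T, τ u ∈ (S.erase s).map (swap y s).toEmbedding} =
          (#A - (#T + 1))! * (#S - 1).descFactorial #T := by
      rw [ih (subset_erase.2 ⟨hTA, hyT⟩), card_map, card_erase_of_mem hyA, card_erase_of_mem hs,
        Nat.sub_sub, add_comm 1]
      intro i hi
      rw [mem_map_equiv, symm_swap, mem_erase, swap_apply_def] at hi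
      grind
    rw [card_permsOfFinset_mapsTo_insert hyA hyT hS, sum_congr rfl count, sum_const, smul_eq_mul,
      card_insert_of_notMem hyT]
    cases #S with
    | zero => simp
    | succ k => rw [Nat.succ_descFactorial_succ, Nat.add_sub_cancel, mul_left_comm]

lemma descFactorial_mul_pow_le {k n : ℕ} (h : k ≤ n) (t : ℕ) :
    k.descFactorial t * n ^ t ≤ n.descFactorial t * k ^ t := by
  induction t with
  | zero => simp
  | succ t ih =>
    have step : (k - t) * n ≤ (n - t) * k := by
      rw [Nat.sub_mul, Nat.sub_mul, mul_comm n k]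
      exact Nat.sub_le_sub_left (Nat.mul_le_mul_left t h) _
    calc k.descFactorial (t + 1) * n ^ (t + 1)
        = ((k - t) * n) * (k.descFactorial t * n ^ t) := by rw [Nat.descFactorial_succ]; ring
      _ ≤ ((n - t) * k) * (n.descFactorial t * k ^ t) := Nat.mul_le_mul step ih
      _ = n.descFactorial (t + 1) * k ^ (t + 1) := by rw [Nat.descFactorial_succ]; ring

lemma card_permsOfFinset_mapsTo_le {A T S : Finset α} (hT : T ⊆ A) (hS : S ⊆ A) :
    (#{τ ∈ permsOfFinset A | ∀ u ∈ T, τ u ∈ S} : ℝ) ≤ (#A)! * (#S / #A) ^ #T := by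
  obtain rfl | hA := A.eq_empty_or_nonempty
  · simp [subset_empty.1 hT, card_perms_of_finset]
  rw [div_pow, ← mul_div_assoc, le_div_iff₀ (by positivity), card_permsOfFinset_mapsTo hT hS,
    ← Nat.factorial_mul_descFactorial (card_le_card hT)]
  simp only [← Nat.cast_mul, ← Nat.cast_pow, Nat.cast_le, mul_assoc]
  exact Nat.mul_le_mul_left _ (descFactorial_mul_pow_le (card_le_card hS) _)

lemma sum_permsOfFinset_pow_card_inter_le {A T S : Finset α} (hT : T ⊆ A) (hS : S ⊆ A) {Q : ℝ}
    (hQ : 1 ≤ Q) :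
    ∑ τ ∈ permsOfFinset A, Q ^ #(T ∩ S.map τ.symm.toEmbedding) ≤
      (#A)! * (1 + (Q - 1) * (#S / #A)) ^ #T := by
  have expand (τ : Perm α) : Q ^ #(T ∩ S.map τ.symm.toEmbedding) =
      ∑ U ∈ T.powerset, if ∀ u ∈ U, τ u ∈ S then (Q - 1) ^ #U else 0 := by
    calc Q ^ #(T ∩ S.map τ.symm.toEmbedding)
        = ∑ U ∈ (T ∩ S.map τ.symm.toEmbedding).powerset, (Q - 1) ^ #U := by
          simpa using (sum_pow_mul_eq_add_pow (Q - 1) 1 (T ∩ S.map τ.symm.toEmbedding)).symm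
      _ = ∑ U ∈ T.powerset, if ∀ u ∈ U, τ u ∈ S then (Q - 1) ^ #U else 0 := by
          rw [← sum_filter]
          refine sum_congr (ext fun U ↦ ?_) fun _ _ ↦ rfl
          simp only [mem_powerset, mem_filter, subset_inter_iff, subset_iff (s₂ := S.map _),
            mem_map_equiv, symm_symm]
  simp only [expand]
  rw [sum_comm]
  calc ∑ U ∈ T.powerset, ∑ τ ∈ permsOfFinset A, (if ∀ u ∈ U, τ u ∈ S then (Q - 1) ^ #U else 0)
      = ∑ U ∈ T.powerset, #{τ ∈ permsOfFinset A | ∀ u ∈ U, τ u ∈ S} * (Q - 1) ^ #U := by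
        simp only [← sum_filter, sum_const, nsmul_eq_mul]
    _ ≤ ∑ U ∈ T.powerset, (#A)! * (#S / #A) ^ #U * (Q - 1) ^ #U := by
        have := sub_nonneg.2 hQ
        gcongr with U hU
        exact card_permsOfFinset_mapsTo_le ((mem_powerset.1 hU).trans hT) hS
    _ = (#A)! * (1 + (Q - 1) * (#S / #A)) ^ #T := by
        have := sum_pow_mul_eq_add_pow ((Q - 1) * (#S / #A : ℝ)) 1 T
        simp only [one_pow, mul_one] at this
        rw [add_comm 1, ← this, mul_sum]
        exact sum_congr rfl fun U _ ↦ by rw [mul_pow]; ring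

lemma map_symm_subset_of_mem_permsOfFinset {A S : Finset α} (hS : S ⊆ A) {σ : Perm α}
    (hσ : σ ∈ permsOfFinset A) : S.map σ.symm.toEmbedding ⊆ A := by
  intro u hu
  rw [mem_map_equiv, symm_symm] at hu
  by_contra hA
  exact hA (mem_permsOfFinset_iff_fixes.1 hσ u hA ▸ hS hu)

lemma sum_sum_permsOfFinset_pow_card_inter_le {A S : Finset α} (hS : S ⊆ A) {Q : ℝ}
    (hQ : 1 ≤ Q) :
    ∑ σ ∈ permsOfFinset A, ∑ τ ∈ permsOfFinset A,
        Q ^ #(S.map σ.symm.toEmbedding ∩ S.map τ.symm.toEmbedding) ≤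
      ((#A)! : ℝ) ^ 2 * (1 + (Q - 1) * (#S / #A)) ^ #S := by
  calc ∑ σ ∈ permsOfFinset A, ∑ τ ∈ permsOfFinset A,
        Q ^ #(S.map σ.symm.toEmbedding ∩ S.map τ.symm.toEmbedding)
      ≤ ∑ σ ∈ permsOfFinset A, ((#A)! * (1 + (Q - 1) * (#S / #A)) ^ #S : ℝ) := by
        gcongr with σ hσ
        simpa using sum_permsOfFinset_pow_card_inter_le
          (map_symm_subset_of_mem_permsOfFinset hS hσ) hS hQ
    _ = ((#A)! : ℝ) ^ 2 * (1 + (Q - 1) * (#S / #A)) ^ #S := by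
        rw [sum_const, card_perms_of_finset, nsmul_eq_mul]
        ring

end PermutationCounts

section TruncatedCoordinates

variable {r : ℕ}

/-- The pairs `u < v` of indices that both lie in `L`, as coordinates in `M_r`. -/
def pairsWithin (L : Finset (Fin r)) : Finset (MrIdx r) := {q | q.1.1 ∈ L ∧ q.1.2 ∈ L}

/-- The coordinates that a truncated condition constrains: the pairs within `L₁` that meet `L₀`,
and all of `L₁ × P`. For `InTrun x k₀ k₁ σ` the sets `L₀ ⊆ L₁` are `σ⁻¹[k₀] ⊆ σ⁻¹[k₁]`. -/
def truncCoords (P : Finset ℕ) (L₀ L₁ : Finset (Fin r)) : Finset (MrIdx r ⊕ MrPIdx r P) :=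
  (pairsWithin L₁ \ pairsWithin (L₁ \ L₀)).disjSum (L₁ ×ˢ univ)

lemma card_pairsWithin (L : Finset (Fin r)) : #(pairsWithin L) = (#L).choose 2 := by
  rw [← card_product_filter_lt, ← card_map (Function.Embedding.subtype _)]
  congr 1
  ext ⟨u, v⟩
  simp [pairsWithin, and_comm]

lemma card_truncCoords (P : Finset ℕ) {L₀ L₁ : Finset (Fin r)} (h : L₀ ⊆ L₁) :
    #(truncCoords P L₀ L₁) = (#L₁).choose 2 - (#L₁ - #L₀).choose 2 + #L₁ * #P := by
  have within_subset : pairsWithin (L₁ \ L₀) ⊆ pairsWithin L₁ := by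
    intro q
    simp only [pairsWithin, mem_filter_univ, mem_sdiff]
    tauto
  rw [truncCoords, card_disjSum, card_sdiff_of_subset within_subset, card_pairsWithin,
    card_pairsWithin, card_sdiff_of_subset h, card_product, card_univ, Fintype.card_coe]

lemma choose_two_sub_choose_two_eq_Ccount {k₀ k₁ : ℕ} (h : k₀ ≤ k₁) :
    k₁.choose 2 - (k₁ - k₀).choose 2 = Ccount k₀ k₁ := by
  obtain ⟨d, rfl⟩ := Nat.exists_eq_add_of_le h
  have vandermonde : (k₀ + d).choose 2 = k₀.choose 2 + k₀ * d + d.choose 2 := by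
    simp [Nat.add_choose_eq, Finset.Nat.antidiagonal_succ]
    ring
  rw [vandermonde, Nat.add_sub_cancel_left, Nat.add_sub_cancel, Ccount, Nat.choose_two_right,
    Nat.add_sub_cancel_left, Nat.mul_sub_one, sq]

lemma card_pairsWithin_sdiff_le (M L : Finset (Fin r)) :
    #(pairsWithin M \ pairsWithin (M \ L)) ≤ #M * #L := by
  rw [← card_product]
  refine card_le_card_of_injOn
    (fun q ↦ if q.1.1 ∈ L then (q.1.2, q.1.1) else (q.1.1, q.1.2)) ?_ ?_
  · intro q hq
    simp only [pairsWithin, coe_sdiff, Set.mem_sdiff, mem_coe, mem_filter_univ, mem_sdiff] at hq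
    grind
  · rintro ⟨q, hq⟩ - ⟨q', hq'⟩ - h
    grind

lemma card_truncCoords_inter_le (P : Finset ℕ) (L₀ L₁ L₀' L₁' : Finset (Fin r)) :
    #(truncCoords P L₀ L₁ ∩ truncCoords P L₀' L₁') ≤ (#L₀ + #P) * #(L₁ ∩ L₁') := by
  have inter_subset : truncCoords P L₀ L₁ ∩ truncCoords P L₀' L₁' ⊆
      truncCoords P L₀ (L₁ ∩ L₁') := by
    rintro (q | q)
    · simp only [truncCoords, pairsWithin, mem_inter, inl_mem_disjSum, mem_sdiff, mem_filter_univ]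
      tauto
    · simp only [truncCoords, mem_inter, inr_mem_disjSum, mem_product]
      tauto
  calc #(truncCoords P L₀ L₁ ∩ truncCoords P L₀' L₁')
      ≤ #(truncCoords P L₀ (L₁ ∩ L₁')) := card_le_card inter_subset
    _ ≤ #(L₁ ∩ L₁') * #L₀ + #(L₁ ∩ L₁') * #P := by
        rw [truncCoords, card_disjSum, card_product, card_univ, Fintype.card_coe]
        gcongr
        exact card_pairsWithin_sdiff_le _ _
    _ = (#L₀ + #P) * #(L₁ ∩ L₁') := by ring

end TruncatedCoordinates

section TruncatedConditions

variable {r : ℕ} {P : Finset ℕ} {x : Fin r → ℕ}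

/-- The index set `[k]`, shifted to the `0`-based indices of `Fin r`. -/
def firstIndices (r k : ℕ) : Finset (Fin r) := {i | (i : ℕ) < k}

/-- The coordinates of `a` on which `InTrun x k₀ k₁ σ a` depends. -/
def constrainedCoords (P : Finset ℕ) (k₀ k₁ : ℕ) (σ : Perm (Fin r)) :
    Finset (MrIdx r ⊕ MrPIdx r P) :=
  truncCoords P ((firstIndices r k₀).map σ.symm.toEmbedding)
    ((firstIndices r k₁).map σ.symm.toEmbedding)

/-- The inverse of `iotaSign` on signs: `1 ↦ 0` and `-1 ↦ 1`; integers other than `±1` are sent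
to the junk value `1`. -/
def signBit (s : ℤ) : ZMod 2 := if s = 1 then 0 else 1

/-- The values that `InTrun x k₀ k₁ σ a` prescribes for `a` on its constrained coordinates,
extended to all coordinates by the same formula. -/
def truncValues (P : Finset ℕ) (x : Fin r → ℕ) (σ : Perm (Fin r)) :
    MrIdx r ⊕ MrPIdx r P → ZMod 2 :=
  Sum.elim (fun q ↦ signBit (jacobiSym (x (σ q.1.1)) (x (σ q.1.2))))
    fun q ↦ signBit (jacobiSym (x (σ q.1)) q.2)

lemma mem_firstIndices {k : ℕ} {i : Fin r} : i ∈ firstIndices r k ↔ (i : ℕ) < k := by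
  simp [firstIndices]

lemma firstIndices_mono {k l : ℕ} (h : k ≤ l) : firstIndices r k ⊆ firstIndices r l :=
  fun _ hi ↦ mem_firstIndices.2 ((mem_firstIndices.1 hi).trans_le h)

lemma card_firstIndices {k : ℕ} (h : k ≤ r) : #(firstIndices r k) = k := by
  rw [firstIndices, Fin.card_filter_val_lt, min_eq_right h]

lemma jacobiSym_eq_iotaSign_iff {m n : ℕ} (h : m.Coprime n) (e : ZMod 2) :
    jacobiSym m n = iotaSign e ↔ e = signBit (jacobiSym m n) := by
  have zero_or_one : ∀ e : ZMod 2, e = 0 ∨ e = 1 := by decide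
  obtain hs | hs := jacobiSym.eq_one_or_neg_one (a := m) (b := n) (by simpa using h) <;>
    obtain rfl | rfl := zero_or_one e <;> simp [hs, iotaSign, signBit]

lemma forall_jacobiSym_eq_iotaSign_asym_iff (hx : Pairwise (Function.onFun Nat.Coprime x))
    (k₀ k₁ : ℕ) (σ : Perm (Fin r)) (a : MrIdx r ⊕ MrPIdx r P → ZMod 2) :
    (∀ i j : Fin r, (i : ℕ) < k₁ → (j : ℕ) < k₁ → σ⁻¹ i < σ⁻¹ j →
      min ((i : ℕ) + 1) ((j : ℕ) + 1) ≤ k₀ →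
      jacobiSym (x i) (x j) = iotaSign (asym a (σ⁻¹ i) (σ⁻¹ j))) ↔
    ∀ q : MrIdx r, (σ q.1.1 : ℕ) < k₁ → (σ q.1.2 : ℕ) < k₁ →
      ((σ q.1.1 : ℕ) < k₀ ∨ (σ q.1.2 : ℕ) < k₀) → a (.inl q) = truncValues P x σ (.inl q) := by
  rw [σ.surjective.forall₂]
  simp only [Perm.inv_def, symm_apply_apply, min_le_iff, Nat.add_one_le_iff]
  constructor
  · rintro h ⟨⟨u, v⟩, huv⟩ hu hv hk
    have := h u v hu hv huv hk
    rwa [asym, dif_pos huv, jacobiSym_eq_iotaSign_iff (hx (σ.injective.ne huv.ne))] at this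
  · intro h u v hu hv huv hk
    rw [asym, dif_pos huv, jacobiSym_eq_iotaSign_iff (hx (σ.injective.ne huv.ne))]
    exact h ⟨(u, v), huv⟩ hu hv hk

lemma forall_jacobiSym_eq_iotaSign_inr_iff (hxP : ∀ i, ∀ p ∈ P, (x i).Coprime p) (k₁ : ℕ)
    (σ : Perm (Fin r)) (a : MrIdx r ⊕ MrPIdx r P → ZMod 2) :
    (∀ i : Fin r, (i : ℕ) < k₁ → ∀ p : {p : ℕ // p ∈ P},
      jacobiSym (x i) (p : ℕ) = iotaSign (a (Sum.inr (σ⁻¹ i, p)))) ↔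
    ∀ q : MrPIdx r P, (σ q.1 : ℕ) < k₁ → a (.inr q) = truncValues P x σ (.inr q) := by
  rw [σ.surjective.forall, Prod.forall]
  simp only [Perm.inv_def, symm_apply_apply, jacobiSym_eq_iotaSign_iff (hxP _ _ (Subtype.prop _)),
    truncValues, Sum.elim_inr]
  exact forall_congr' fun u ↦ forall_comm

lemma inTrun_iff_eqOn (hx : Pairwise (Function.onFun Nat.Coprime x))
    (hxP : ∀ i, ∀ p ∈ P, (x i).Coprime p) (k₀ k₁ : ℕ) (σ : Perm (Fin r))
    (a : MrIdx r ⊕ MrPIdx r P → ZMod 2) :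
    InTrun x k₀ k₁ σ a ↔ Set.EqOn a (truncValues P x σ) (constrainedCoords P k₀ k₁ σ) := by
  rw [InTrun, forall_jacobiSym_eq_iotaSign_asym_iff hx,
    forall_jacobiSym_eq_iotaSign_inr_iff hxP, Set.EqOn, Sum.forall]
  refine and_congr (forall_congr' fun q ↦ ?_) (forall_congr' fun q ↦ ?_)
  · simp only [constrainedCoords, truncCoords, pairsWithin, mem_coe, inl_mem_disjSum, mem_sdiff,
      mem_filter_univ, mem_map_equiv, symm_symm, mem_firstIndices]
    tauto
  · simp only [constrainedCoords, truncCoords, mem_coe, inr_mem_disjSum, mem_product, mem_univ,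
      and_true, mem_map_equiv, symm_symm, mem_firstIndices]

lemma card_constrainedCoords (P : Finset ℕ) {k₀ k₁ : ℕ} (h01 : k₀ ≤ k₁) (h1r : k₁ ≤ r)
    (σ : Perm (Fin r)) : #(constrainedCoords P k₀ k₁ σ) = Ccount k₀ k₁ + k₁ * #P := by
  rw [constrainedCoords, card_truncCoords P (map_subset_map.2 (firstIndices_mono h01)), card_map,
    card_map, card_firstIndices h1r, card_firstIndices (h01.trans h1r),
    choose_two_sub_choose_two_eq_Ccount h01]

lemma sum_sum_pow_card_constrainedCoords_inter_le (P : Finset ℕ) {k₀ k₁ k₂ : ℕ} (h01 : k₀ ≤ k₁)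
    (h12 : k₁ ≤ k₂) (h2r : k₂ ≤ r) :
    ∑ σ ∈ permsOfFinset (firstIndices r k₂), ∑ τ ∈ permsOfFinset (firstIndices r k₂),
        (2 : ℝ) ^ #(constrainedCoords P k₀ k₁ σ ∩ constrainedCoords P k₀ k₁ τ) ≤
      (k₂ ! : ℝ) ^ 2 * (1 + (2 ^ (k₀ + #P) - 1) * (k₁ / k₂)) ^ k₁ := by
  have inter_le (σ τ : Perm (Fin r)) :
      #(constrainedCoords P k₀ k₁ σ ∩ constrainedCoords P k₀ k₁ τ) ≤ (k₀ + #P) *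
        #((firstIndices r k₁).map σ.symm.toEmbedding ∩
          (firstIndices r k₁).map τ.symm.toEmbedding) := by
    refine (card_truncCoords_inter_le P _ _ _ _).trans_eq ?_
    rw [card_map, card_firstIndices (h01.trans (h12.trans h2r))]
  have overlap := sum_sum_permsOfFinset_pow_card_inter_le (firstIndices_mono (r := r) h12)
    (one_le_pow₀ (n := k₀ + #P) (one_le_two (α := ℝ)))
  rw [card_firstIndices h2r, card_firstIndices (h12.trans h2r)] at overlap
  refine le_trans ?_ overlap
  gcongr with σ _ τ _
  rw [← pow_mul]
  exact pow_le_pow_right₀ one_le_two (inter_le σ τ)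

lemma card_inTrun_eq_card_eqOn (hx : Pairwise (Function.onFun Nat.Coprime x))
    (hxP : ∀ i, ∀ p ∈ P, (x i).Coprime p) (k₀ k₁ k₂ : ℕ)
    (a : MrIdx r ⊕ MrPIdx r P → ZMod 2) :
    Nat.card {σ : Perm (Fin r) // (∀ i : Fin r, k₂ ≤ (i : ℕ) → σ i = i) ∧ InTrun x k₀ k₁ σ a} =
      #{σ ∈ permsOfFinset (firstIndices r k₂) |
        Set.EqOn a (truncValues P x σ) (constrainedCoords P k₀ k₁ σ)} := by
  rw [Nat.card_eq_fintype_card]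
  refine Fintype.card_of_subtype _ fun σ ↦ ?_
  simp only [mem_filter, mem_permsOfFinset_iff_fixes, mem_firstIndices, not_lt,
    inTrun_iff_eqOn hx hxP]

lemma sum_sub_card_inTrun_sq_le {k₀ k₁ k₂ : ℕ} (h01 : k₀ ≤ k₁) (h12 : k₁ ≤ k₂) (h2r : k₂ ≤ r)
    (hx : Pairwise (Function.onFun Nat.Coprime x)) (hxP : ∀ i, ∀ p ∈ P, (x i).Coprime p) :
    ∑ a : MrIdx r ⊕ MrPIdx r P → ZMod 2,
        ((k₂ ! : ℝ) / 2 ^ (Ccount k₀ k₁ + k₁ * #P) -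
          (Nat.card {σ : Perm (Fin r) //
            (∀ i : Fin r, k₂ ≤ (i : ℕ) → σ i = i) ∧ InTrun x k₀ k₁ σ a} : ℝ)) ^ 2 ≤
      2 ^ Nat.card (MrIdx r ⊕ MrPIdx r P) / 2 ^ (2 * (Ccount k₀ k₁ + k₁ * #P)) *
        ((k₂ ! : ℝ) ^ 2 * (1 + (2 ^ (k₀ + #P) - 1) * (k₁ / k₂)) ^ k₁ - (k₂ ! : ℝ) ^ 2) := by
  have second_moment := sum_sub_card_eqOn_sq_le (permsOfFinset (firstIndices r k₂))
    (constrainedCoords P k₀ k₁) (truncValues P x) fun σ _ ↦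
      card_constrainedCoords P h01 (h12.trans h2r) σ
  simp only [ZMod.card, Nat.cast_ofNat, card_perms_of_finset, card_firstIndices h2r]
    at second_moment
  rw [← Nat.card_eq_fintype_card] at second_moment
  simp only [card_inTrun_eq_card_eqOn hx hxP]
  refine second_moment.trans ?_
  gcongr
  exact sum_sum_pow_card_constrainedCoords_inter_le P h01 h12 h2r

end TruncatedConditions

lemma one_add_pow_le_one_add_two_mul {k : ℕ} {y : ℝ} (hy : 0 ≤ y) (h : k * y ≤ 1) :
    (1 + y) ^ k ≤ 1 + 2 * (k * y) := by
  have hky : 0 ≤ k * y := by positivity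
  calc (1 + y) ^ k ≤ Real.exp y ^ k := by
        gcongr
        linarith [Real.add_one_le_exp y]
    _ = Real.exp (k * y) := (Real.exp_nat_mul y k).symm
    _ ≤ 1 + 2 * (k * y) := by
        have := Real.abs_exp_sub_one_le (abs_le.2 ⟨by linarith, h⟩)
        rw [abs_of_nonneg hky] at this
        linarith [le_abs_self (Real.exp (k * y) - 1)]

lemma one_add_pow_sub_one_le {k₁ k₂ : ℕ} {Q : ℝ} (hQ : 1 ≤ Q) (hk₂ : 0 < k₂)
    (h : Q * k₁ ^ 2 ≤ k₂) :
    (1 + (Q - 1) * (k₁ / k₂)) ^ k₁ - 1 ≤ 2 * Q * k₁ ^ 2 / k₂ := by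
  have := sub_nonneg.2 hQ
  have exponent_le : k₁ * ((Q - 1) * (k₁ / k₂)) ≤ Q * k₁ ^ 2 / k₂ := by
    rw [show k₁ * ((Q - 1) * (k₁ / k₂)) = (Q - 1) * k₁ ^ 2 / k₂ by ring]
    gcongr
    linarith
  have gap : Q * k₁ ^ 2 / k₂ ≤ 1 := (div_le_one (by positivity)).2 h
  calc (1 + (Q - 1) * (k₁ / k₂)) ^ k₁ - 1
      ≤ 2 * (k₁ * ((Q - 1) * (k₁ / k₂))) :=
        sub_left_le_of_le_add
          (one_add_pow_le_one_add_two_mul (by positivity) (exponent_le.trans gap))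
    _ ≤ 2 * (Q * k₁ ^ 2 / k₂) := by gcongr
    _ = 2 * Q * k₁ ^ 2 / k₂ := by ring

theorem second_moment_truncated_general {r : ℕ} {P : Finset ℕ} {k₀ k₁ k₂ : ℕ} (h01 : k₀ ≤ k₁)
    (h2r : k₂ ≤ r) (hk₂ : 0 < k₂) (hgap : 2 ^ (k₀ + #P) * k₁ ^ 2 ≤ k₂) {x : Fin r → ℕ}
    (hx : Pairwise (Function.onFun Nat.Coprime x)) (hxP : ∀ i, ∀ p ∈ P, (x i).Coprime p) :
    ∑ a : MrIdx r ⊕ MrPIdx r P → ZMod 2,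
        ((k₂ ! : ℝ) / 2 ^ (Ccount k₀ k₁ + k₁ * #P) -
          (Nat.card {σ : Perm (Fin r) //
            (∀ i : Fin r, k₂ ≤ (i : ℕ) → σ i = i) ∧ InTrun x k₀ k₁ σ a} : ℝ)) ^ 2 ≤
      ((2 : ℝ) ^ (k₀ + #P + 1) * (k₁ : ℝ) ^ 2 / (k₂ : ℝ)) *
        ((2 : ℝ) ^ (Nat.card (MrIdx r ⊕ MrPIdx r P)) /
          (2 : ℝ) ^ (2 * Ccount k₀ k₁ + 2 * k₁ * #P)) * ((k₂ ! : ℝ)) ^ 2 := by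
  have h12 : k₁ ≤ k₂ := calc
    k₁ ≤ k₁ ^ 2 := Nat.le_self_pow two_ne_zero k₁
    _ ≤ 2 ^ (k₀ + #P) * k₁ ^ 2 := Nat.le_mul_of_pos_left _ (by positivity)
    _ ≤ k₂ := hgap
  have excess_le := one_add_pow_sub_one_le (one_le_pow₀ one_le_two) hk₂
    (by exact_mod_cast hgap : (2 : ℝ) ^ (k₀ + #P) * k₁ ^ 2 ≤ k₂)
  have constrained : 2 * Ccount k₀ k₁ + 2 * k₁ * #P = 2 * (Ccount k₀ k₁ + k₁ * #P) := by ring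
  refine (sum_sub_card_inTrun_sq_le h01 h12 h2r hx hxP).trans ?_
  rw [constrained]
  calc 2 ^ Nat.card (MrIdx r ⊕ MrPIdx r P) / 2 ^ (2 * (Ccount k₀ k₁ + k₁ * #P)) *
        ((k₂ ! : ℝ) ^ 2 * (1 + (2 ^ (k₀ + #P) - 1) * (k₁ / k₂)) ^ k₁ - (k₂ ! : ℝ) ^ 2)
      = ((1 + (2 ^ (k₀ + #P) - 1) * (k₁ / k₂)) ^ k₁ - 1) *
        (2 ^ Nat.card (MrIdx r ⊕ MrPIdx r P) / 2 ^ (2 * (Ccount k₀ k₁ + k₁ * #P))) *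
        (k₂ ! : ℝ) ^ 2 := by ring
    _ ≤ 2 ^ (k₀ + #P + 1) * k₁ ^ 2 / k₂ *
        (2 ^ Nat.card (MrIdx r ⊕ MrPIdx r P) / 2 ^ (2 * (Ccount k₀ k₁ + k₁ * #P))) *
        (k₂ ! : ℝ) ^ 2 := by
        rw [pow_succ' 2 (k₀ + #P)]
        gcongr

lemma Prebox.pairwise_coprime {r : ℕ} (B : Prebox r) {x : Fin r → ℕ}
    (hx : ∀ i : Fin r, x i ∈ B.X (i + 1)) : Pairwise (Function.onFun Nat.Coprime x) := by
  intro i j hij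
  have mem (i : Fin r) : (i : ℕ) + 1 ∈ Icc 1 r := mem_Icc.2 ⟨by omega, i.isLt⟩
  have disjoint := B.disj_X _ (mem i) _ (mem j) (by simpa [Fin.val_inj] using hij)
  exact (Nat.coprime_primes (B.prime_X _ (mem i) _ (hx i)).1 (B.prime_X _ (mem j) _ (hx j)).1).2
    (disjoint_iff_ne.1 disjoint _ (hx i) _ (hx j))

lemma Prebox.coprime_of_mem_P {r : ℕ} (B : Prebox r) {x : Fin r → ℕ}
    (hx : ∀ i : Fin r, x i ∈ B.X (i + 1)) (i : Fin r) (p : ℕ) (hp : p ∈ B.P) :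
    (x i).Coprime p := by
  have mem : (i : ℕ) + 1 ∈ Icc 1 r := mem_Icc.2 ⟨by omega, i.isLt⟩
  exact (Nat.coprime_primes (B.prime_X _ mem _ (hx i)).1 (B.prime_P p hp).1).2
    (disjoint_iff_ne.1 (B.disj_XP _ mem) _ (hx i) _ hp)

/-- Lemma 7.4 (second moment bound for truncated Legendre conditions under permutations). -/
theorem second_moment_truncated (r : ℕ) (B : Prebox r) (k₀ k₁ k₂ : ℕ)
    (h01 : k₀ ≤ k₁) (h12 : k₁ ≤ k₂) (h2r : k₂ ≤ r)
    (hgap : 2 ^ (k₀ + B.P.card + 1) * k₁ ^ 2 < k₂) :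
    ∀ x : Fin r → ℕ, (∀ i : Fin r, x i ∈ B.X ((i : ℕ) + 1)) →
      ∑ a : MrIdx r ⊕ MrPIdx r B.P → ZMod 2,
        ((k₂.factorial : ℝ) / 2 ^ (Ccount k₀ k₁ + k₁ * B.P.card) -
          (Nat.card {σ : Equiv.Perm (Fin r) //
            (∀ i : Fin r, k₂ ≤ (i : ℕ) → σ i = i) ∧ InTrun x k₀ k₁ σ a} : ℝ)) ^ 2 ≤
      ((2 : ℝ) ^ (k₀ + B.P.card + 1) * (k₁ : ℝ) ^ 2 / (k₂ : ℝ)) *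
        ((2 : ℝ) ^ (Nat.card (MrIdx r ⊕ MrPIdx r B.P)) /
          (2 : ℝ) ^ (2 * Ccount k₀ k₁ + 2 * k₁ * B.P.card)) *
        ((k₂.factorial : ℝ)) ^ 2 := by
  intro x hx
  have gap : 2 ^ (k₀ + #B.P) * k₁ ^ 2 ≤ k₂ :=
    (Nat.mul_le_mul_right _ (Nat.pow_le_pow_right two_pos (Nat.le_succ _))).trans hgap.le
  exact second_moment_truncated_general h01 h2r (Nat.zero_lt_of_lt hgap) gap
    (B.pairwise_coprime hx) (B.coprime_of_mem_P hx)
end
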